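/- arXiv:2102.05248 — 4 statements merged into one kernel-verified Lean document; each statement's English description precedes it below -/
import Mathlib

section
/- Let B be a set of m + p − 1 column indices of the constraint matrix A whose corresponding columns are linearly independent. Then the undirected subgraph of G whose edge set consists of the arcs contained in B is connected and spans V: for any two nodes i, j ∈ V there exists a walk from i to j each of whose steps traverses, in either direction, an arc belonging to B. -/
open Matrix

noncomputable section

/-- Node–arc incidence matrix of the directed multigraph given by `src`, `tgt`. -/
def incidenceMatrix (m n : ℕ) (src tgt : Fin n → Fin m) : Matrix (Fin m) (Fin n) ℝ :=
  Matrix.of fun i e => if src e = i then (1 : ℝ) else if tgt e = i then -1 else 0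

/-- Interdependence matrix `Q̂`: row `k` has `-α k` in the parent column and `1` in the
child column. -/
def interMatrix (n p : ℕ) (parent child : Fin p → Fin n) (α : Fin p → ℝ) :
    Matrix (Fin p) (Fin n) ℝ :=
  Matrix.of fun k e => if e = parent k then -α k else if e = child k then (1 : ℝ) else 0

/-- The constraint matrix `A = [[Â, 0], [Q̂, I]]`. -/
def constraintMatrix (m n p : ℕ) (src tgt : Fin n → Fin m)
    (parent child : Fin p → Fin n) (α : Fin p → ℝ) :
    Matrix (Fin m ⊕ Fin p) (Fin n ⊕ Fin p) ℝ :=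
  Matrix.fromBlocks (incidenceMatrix m n src tgt) 0 (interMatrix n p parent child α) 1

/-- A column index of `A` is an *interdependent variable* if it is a slack variable or an
arc appearing in some interdependence pair. -/
def interVar (n p : ℕ) (parent child : Fin p → Fin n) : Fin n ⊕ Fin p → Prop
  | Sum.inl e => ∃ k, parent k = e ∨ child k = e
  | Sum.inr _ => True

/-- `δ_e^T`. -/
def deltaCoef (m n : ℕ) (src tgt : Fin n → Fin m) (e : Fin n) (T : Finset (Fin m)) : ℝ :=
  if src e ∈ T ∧ tgt e ∉ T then 1 else if src e ∉ T ∧ tgt e ∈ T then -1 else 0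

/-- The `r × r` matrix `D` associated with a candidate basis: rows are indexed by the
trees `T_1, …, T_{r-p}` followed by the `p` interdependencies; columns are indexed by
the interdependent variables of `B`, enumerated by `col`. -/
def Dmat (m n p : ℕ) (src tgt : Fin n → Fin m) (parent child : Fin p → Fin n)
    (α : Fin p → ℝ) (r : ℕ) (T : Fin (r - p + 1) → Finset (Fin m))
    (col : Fin r → Fin n ⊕ Fin p) :
    Matrix (Fin (r - p) ⊕ Fin p) (Fin r) ℝ :=
  Matrix.of fun row j =>
    match row, col j with
    | Sum.inl h, Sum.inl e => deltaCoef m n src tgt e (T h.castSucc)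
    | Sum.inl _, Sum.inr _ => 0
    | Sum.inr k, Sum.inl e => interMatrix n p parent child α k e
    | Sum.inr k, Sum.inr k' => if k = k' then (1 : ℝ) else 0

/-- The independent arcs contained in `B` form an acyclic undirected subgraph of `G`. -/
def NoIndepCycle (m n p : ℕ) (src tgt : Fin n → Fin m) (parent child : Fin p → Fin n)
    (B : Finset (Fin n ⊕ Fin p)) : Prop :=
  ¬ ∃ (k : ℕ) (_ : 1 ≤ k) (e : Fin k → Fin n) (v : Fin (k + 1) → Fin m),
      Function.Injective e ∧
      (∀ i, ¬ interVar n p parent child (Sum.inl (e i))) ∧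
      (∀ i, Sum.inl (e i) ∈ B) ∧
      v 0 = v (Fin.last k) ∧
      ∀ i : Fin k, ({src (e i), tgt (e i)} : Set (Fin m)) = {v i.castSucc, v i.succ}

/-- Reachability in the undirected subgraph formed by the independent arcs of `B`. -/
def indepReach (m n p : ℕ) (src tgt : Fin n → Fin m) (parent child : Fin p → Fin n)
    (B : Finset (Fin n ⊕ Fin p)) : Fin m → Fin m → Prop :=
  Relation.ReflTransGen fun a b => ∃ e, Sum.inl e ∈ B ∧
    ¬ interVar n p parent child (Sum.inl e) ∧
    ((src e = a ∧ tgt e = b) ∨ (src e = b ∧ tgt e = a))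

/-- Reduced cost vector `c^π = c̄ − Aᵀ π` (slack variables get cost `0`). -/
def reducedCost (m n p : ℕ) (src tgt : Fin n → Fin m) (parent child : Fin p → Fin n)
    (α : Fin p → ℝ) (c : Fin n → ℝ) (π : Fin m ⊕ Fin p → ℝ) : Fin n ⊕ Fin p → ℝ :=
  fun j => Sum.elim c (fun _ => (0 : ℝ)) j
    - (constraintMatrix m n p src tgt parent child α)ᵀ.mulVec π j

/-!
A potential `f` on the nodes, extended by zero to the side constraints, is orthogonal to every
slack column, and to the column of an arc exactly when it takes the same value at both ends.
Since `m + p - 1` independent vectors in a space of dimension `m + p` have an annihilator of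
dimension at most one, every potential that is constant along the arcs in `B` is a multiple of
the all-ones potential, hence constant. Applied to the indicator of the nodes reachable from `i`
through arcs in `B`, this says that every node is reachable.
-/

section LinearAlgebra

theorem exists_smul_eq_of_finrank_le_one {K W : Type*} [DivisionRing K] [AddCommGroup W]
    [Module K W] [FiniteDimensional K W] (hW : Module.finrank K W ≤ 1) {x : W} (hx : x ≠ 0)
    (y : W) : ∃ c : K, c • x = y := by
  have : Nontrivial W := nontrivial_of_ne x 0 hx
  exact exists_smul_eq_of_finrank_eq_one (hW.antisymm Module.finrank_pos) hx y

variable {K : Type*} [Field K]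

theorem finrank_ker_mulVecLin_add_card {ι κ : Type*} [Fintype ι] [Fintype κ] (M : Matrix ι κ K)
    (hM : LinearIndependent K M.row) :
    Module.finrank K (LinearMap.ker M.mulVecLin) + Fintype.card ι = Fintype.card κ := by
  have rank_nullity := M.mulVecLin.finrank_range_add_finrank_ker
  rw [← Matrix.rank, hM.rank_matrix, Module.finrank_fintype_fun_eq_card] at rank_nullity
  omega

theorem exists_smul_eq_of_mulVec_eq_zero {ι κ : Type*} [Fintype ι] [Fintype κ]
    (M : Matrix ι κ K) (hM : LinearIndependent K M.row)
    (hcard : Fintype.card κ ≤ Fintype.card ι + 1) {x y : κ → K}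
    (hMx : M *ᵥ x = 0) (hMy : M *ᵥ y = 0) (hx : x ≠ 0) : ∃ c : K, c • x = y := by
  have hker : Module.finrank K (LinearMap.ker M.mulVecLin) ≤ 1 := by
    have := finrank_ker_mulVecLin_add_card M hM
    omega
  obtain ⟨c, hc⟩ := exists_smul_eq_of_finrank_le_one hker
    (x := ⟨x, hMx⟩) (fun h ↦ hx (congrArg Subtype.val h)) ⟨y, hMy⟩
  exact ⟨c, congrArg Subtype.val hc⟩

end LinearAlgebra

theorem reflTransGen_of_forall_invariant {V α : Type*} [Nontrivial α] {r : V → V → Prop}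
    (hr : ∀ {a b}, r a b → r b a) {i j : V}
    (h : ∀ f : V → α, (∀ a b, r a b → f a = f b) → f i = f j) : Relation.ReflTransGen r i j := by
  classical
  obtain ⟨x, y, hxy⟩ := exists_pair_ne α
  have reach_congr : ∀ a b, r a b → (Relation.ReflTransGen r i a ↔ Relation.ReflTransGen r i b) :=
    fun a b hab ↦ ⟨fun ha ↦ ha.tail hab, fun hb ↦ hb.tail (hr hab)⟩
  by_contra hij
  have hf := h (fun v ↦ if Relation.ReflTransGen r i v then x else y) fun a b hab ↦
    if_congr (reach_congr a b hab) rfl rfl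
  rw [if_pos .refl, if_neg hij] at hf
  exact hxy hf

section SignedIncidence

variable {V E : Type*} [DecidableEq V]

/-- The node–arc incidence matrix over a ring `R` of the directed multigraph given by `src` and
`tgt`. The two unit vectors are subtracted, so that the column of a loop is zero. -/
def signedIncidence (R : Type*) [Ring R] (src tgt : E → V) : Matrix V E R :=
  Matrix.of fun v e ↦ (Pi.single (src e) 1 - Pi.single (tgt e) 1 : V → R) v

theorem vecMul_signedIncidence {R : Type*} [Ring R] [Fintype V] (src tgt : E → V) (f : V → R) :
    f ᵥ* signedIncidence R src tgt = fun e ↦ f (src e) - f (tgt e) := by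
  ext e
  change f ⬝ᵥ (Pi.single (src e) 1 - Pi.single (tgt e) 1) = _
  rw [dotProduct_sub, dotProduct_single_one, dotProduct_single_one]

theorem elim_zero_vecMul_fromBlocks_signedIncidence {R P S : Type*} [Ring R] [Fintype V]
    [Fintype P] (src tgt : E → V) (Q : Matrix P E R) (T : Matrix P S R) (f : V → R) :
    Sum.elim f 0 ᵥ* fromBlocks (signedIncidence R src tgt) 0 Q T =
      Sum.elim (fun e ↦ f (src e) - f (tgt e)) 0 := by
  simp [vecMul_fromBlocks, vecMul_signedIncidence]

theorem incidenceMatrix_eq_signedIncidence {m n : ℕ} {src tgt : Fin n → Fin m}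
    (hst : ∀ e, src e ≠ tgt e) : incidenceMatrix m n src tgt = signedIncidence ℝ src tgt := by
  ext i e
  have := hst e
  simp only [incidenceMatrix, signedIncidence, Matrix.of_apply, Pi.sub_apply, Pi.single_apply]
  grind

variable {K P S : Type*} [Field K] [Fintype V] [Fintype P]

theorem potential_eq_of_linearIndependent_columns (src tgt : E → V) (Q : Matrix P E K)
    (T : Matrix P S K) (B : Finset (E ⊕ S)) (hcard : Fintype.card V + Fintype.card P ≤ B.card + 1)
    (hB : LinearIndependent K fun b : B ↦ (fromBlocks (signedIncidence K src tgt) 0 Q T)ᵀ b.1)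
    {f : V → K} (hf : ∀ e, Sum.inl e ∈ B → f (src e) = f (tgt e)) (i j : V) : f i = f j := by
  let M : Matrix B (V ⊕ P) K := .of fun b ↦ (fromBlocks (signedIncidence K src tgt) 0 Q T)ᵀ b.1
  have annihilates {g : V → K} (hg : ∀ e, Sum.inl e ∈ B → g (src e) = g (tgt e)) :
      M *ᵥ Sum.elim g 0 = 0 := by
    ext ⟨b, hb⟩
    change ((fromBlocks (signedIncidence K src tgt) 0 Q T)ᵀ *ᵥ Sum.elim g 0) b = 0
    rw [mulVec_transpose, elim_zero_vecMul_fromBlocks_signedIncidence]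
    cases b with
    | inl e => exact sub_eq_zero.mpr (hg e hb)
    | inr s => rfl
  have ones_ne_zero : Sum.elim (1 : V → K) (0 : P → K) ≠ 0 :=
    fun h ↦ one_ne_zero (congrFun h (.inl i))
  obtain ⟨c, hc⟩ := exists_smul_eq_of_mulVec_eq_zero M hB (by simpa using hcard)
    (annihilates fun _ _ ↦ rfl) (annihilates hf) ones_ne_zero
  have value (v : V) : c = f v := by simpa using congrFun hc (.inl v)
  exact (value i).symm.trans (value j)

theorem basis_arcs_connected_general (src tgt : E → V) (Q : Matrix P E K) (T : Matrix P S K)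
    (B : Finset (E ⊕ S)) (hcard : Fintype.card V + Fintype.card P ≤ B.card + 1)
    (hB : LinearIndependent K fun b : B ↦ (fromBlocks (signedIncidence K src tgt) 0 Q T)ᵀ b.1)
    (i j : V) :
    Relation.ReflTransGen (fun a b ↦ ∃ e, Sum.inl e ∈ B ∧
      ((src e = a ∧ tgt e = b) ∨ (src e = b ∧ tgt e = a))) i j := by
  refine reflTransGen_of_forall_invariant (α := K)
    (fun ⟨e, he, hab⟩ ↦ ⟨e, he, hab.symm⟩) fun f hf ↦ ?_
  exact potential_eq_of_linearIndependent_columns src tgt Q T B hcard hB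
    (fun e he ↦ hf _ _ ⟨e, he, .inl ⟨rfl, rfl⟩⟩) i j

end SignedIncidence

/-- If `B` is a set of `m + p − 1` linearly independent columns of `A`,
then the arcs contained in `B` form a connected spanning subgraph of `G`. -/
theorem basis_arcs_connected (m n p : ℕ) (src tgt : Fin n → Fin m) (hst : ∀ e, src e ≠ tgt e)
    (parent child : Fin p → Fin n) (α : Fin p → ℝ)
    (hpc : ∀ k k' : Fin p, parent k ≠ child k')
    (hpinj : Function.Injective parent) (hcinj : Function.Injective child)
    (B : Finset (Fin n ⊕ Fin p)) (hBcard : B.card = m + p - 1)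
    (hBind : LinearIndependent ℝ (fun j : B =>
      (constraintMatrix m n p src tgt parent child α)ᵀ j.1)) :
    ∀ i j : Fin m, Relation.ReflTransGen
      (fun a b => ∃ e, Sum.inl e ∈ B ∧
        ((src e = a ∧ tgt e = b) ∨ (src e = b ∧ tgt e = a))) i j := by
  rw [constraintMatrix, incidenceMatrix_eq_signedIncidence hst] at hBind
  exact basis_arcs_connected_general src tgt _ _ B (by simp only [Fintype.card_fin]; omega) hBind
end
end

section
/- Let B be a set of m + p − 1 column indices of A whose columns are linearly independent, containing exactly r interdependent variables whose independent arcs form a spanning forest of G with components T_1, …, T_{r−p+1}, and let D be the associated r×r matrix. Let L and U partition the remaining column indices, with every nonbasic slack variable belonging to L. Suppose x̄ ∈ ℝ^{n+p} satisfies A x̄ = (b, β) (the first m components of the right-hand side being b and the last p being β), x̄_j = 0 for every j ∈ L, and x̄_e = u_e for every arc e ∈ U. For each tree T_h define the net requirement b(T_h) = Σ_{i ∈ T_h} b_i + Σ u_e over arcs e ∈ U with s(e) ∉ T_h and t(e) ∈ T_h, minus Σ u_e over arcs e ∈ U with s(e) ∈ T_h and t(e) ∉ T_h. For each interdependence t with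 parent arc e_P, child arc e_C, and constants α_t, β_t define b(t) = β_t + (α_t u_{e_P} if e_P ∈ U, else 0) − (u_{e_C} if e_C ∈ U, else 0). Let b̃ = (b(T_1), …, b(T_{r−p}), b(1), …, b(p)) ∈ ℝ^r. Then the subvector x̃ of x̄ consisting of the components of the interdependent variables in B, ordered as the columns of D, satisfies D x̃ = b̃. -/
open Matrix

noncomputable section

/-!
Summing the flow-balance equations over the nodes of a tree `T_h` replaces the incidence coefficient
of each arc by `δ_e^{T_h}`. Independent arcs of `B` lie inside a tree or outside it, so they drop
out of the summed equations, and they never occur in the interdependence equations. Nonbasic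
variables are `0` or, in `U`, equal to a capacity. Moving the capacity terms to the right-hand side
leaves the columns of `D` on the left and `b̃` on the right.
-/

/-- The constraint matrix with its node rows aggregated over the node sets `S h`: the node part of
row `h` consists of the coefficients `δ_e^{S h}`. For the trees `T_1, …, T_{r-p}`, the
columns of the interdependent variables of `B` form `D`. -/
def aggregatedMatrix {ι : Type*} {m n p : ℕ} (src tgt : Fin n → Fin m)
    (parent child : Fin p → Fin n) (α : Fin p → ℝ) (S : ι → Finset (Fin m)) :
    Matrix (ι ⊕ Fin p) (Fin n ⊕ Fin p) ℝ :=
  Matrix.fromBlocks (Matrix.of fun h e => deltaCoef m n src tgt e (S h)) 0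
    (interMatrix n p parent child α) 1

section Sums

variable {ι κ σ τ M : Type*}

lemma sum_comp_add_sum_eq_sum [Fintype ι] [Fintype κ] [AddCommMonoid M] {c : ι → κ}
    (hc : Function.Injective c) {U : Finset κ} (hU : ∀ i, c i ∉ U) {f : κ → M}
    (hf : ∀ j ∉ Set.range c, j ∉ U → f j = 0) :
    ∑ i, f (c i) + ∑ j ∈ U, f j = ∑ j, f j := by
  classical
  have hdisj : Disjoint (Finset.univ.image c) U := by
    simpa [Finset.disjoint_left] using hU
  rw [← Finset.sum_image fun _ _ _ _ h => hc h, ← Finset.sum_union hdisj]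
  refine Finset.sum_subset (Finset.subset_univ _) fun j _ hj => ?_
  simp only [Finset.mem_union, Finset.mem_image, Finset.mem_univ, true_and, not_or] at hj
  exact hf j hj.1 hj.2

lemma sum_eq_sum_inl_of_inr_notMem [Fintype σ] [DecidableEq σ] [DecidableEq τ] [AddCommMonoid M]
    {U : Finset (σ ⊕ τ)} (hU : ∀ k, Sum.inr k ∉ U) (f : σ ⊕ τ → M) :
    ∑ j ∈ U, f j = ∑ e with Sum.inl e ∈ U, f (Sum.inl e) := by
  have hright : U.toRight = ∅ := by simpa [Finset.eq_empty_iff_forall_notMem] using hU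
  have hleft : U.toLeft = Finset.univ.filter fun e => Sum.inl e ∈ U := by ext; simp
  rw [Finset.sum_sum_eq_sum_toLeft_add_sum_toRight, hright, hleft, Finset.sum_empty, add_zero]

end Sums

section Incidence

variable {m n : ℕ} {src tgt : Fin n → Fin m}

lemma incidenceMatrix_apply_eq_sub {e : Fin n} (he : src e ≠ tgt e) (i : Fin m) :
    incidenceMatrix m n src tgt i e =
      (if src e = i then 1 else 0) - if tgt e = i then 1 else 0 := by
  simp only [incidenceMatrix, Matrix.of_apply]
  grind

lemma deltaCoef_eq_sub (e : Fin n) (S : Finset (Fin m)) :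
    deltaCoef m n src tgt e S = (if src e ∈ S then 1 else 0) - if tgt e ∈ S then 1 else 0 := by
  simp only [deltaCoef]
  grind

lemma deltaCoef_eq_zero_of_mem_iff_mem {e : Fin n} {S : Finset (Fin m)}
    (h : src e ∈ S ↔ tgt e ∈ S) : deltaCoef m n src tgt e S = 0 := by
  simp [deltaCoef_eq_sub, h]

lemma sum_incidenceMatrix {e : Fin n} (he : src e ≠ tgt e) (S : Finset (Fin m)) :
    ∑ i ∈ S, incidenceMatrix m n src tgt i e = deltaCoef m n src tgt e S := by
  simp only [incidenceMatrix_apply_eq_sub he, Finset.sum_sub_distrib, Finset.sum_ite_eq,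
    deltaCoef_eq_sub]

lemma sum_incidenceMatrix_mulVec (hst : ∀ e, src e ≠ tgt e) (S : Finset (Fin m))
    (y : Fin n → ℝ) :
    ∑ i ∈ S, (incidenceMatrix m n src tgt *ᵥ y) i = ∑ e, deltaCoef m n src tgt e S * y e := by
  simp only [Matrix.mulVec, dotProduct]
  rw [Finset.sum_comm]
  simp only [← Finset.sum_mul, sum_incidenceMatrix (hst _)]

lemma sum_deltaCoef_mul (S : Finset (Fin m)) (F : Finset (Fin n)) (u : Fin n → ℝ) :
    ∑ e ∈ F, deltaCoef m n src tgt e S * u e =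
      ∑ e ∈ F with src e ∈ S ∧ tgt e ∉ S, u e - ∑ e ∈ F with src e ∉ S ∧ tgt e ∈ S, u e := by
  rw [Finset.sum_filter, Finset.sum_filter, ← Finset.sum_sub_distrib]
  refine Finset.sum_congr rfl fun e _ => ?_
  simp only [deltaCoef]
  grind

end Incidence

section Interdependence

variable {n p : ℕ} {parent child : Fin p → Fin n}

lemma interMatrix_apply_eq_sub (α : Fin p → ℝ) {k : Fin p} (hk : parent k ≠ child k)
    (e : Fin n) :
    interMatrix n p parent child α k e =
      (if e = child k then 1 else 0) - if e = parent k then α k else 0 := by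
  simp only [interMatrix, Matrix.of_apply]
  grind

lemma sum_interMatrix_mul (α : Fin p → ℝ) {k : Fin p} (hk : parent k ≠ child k)
    (F : Finset (Fin n)) (u : Fin n → ℝ) :
    ∑ e ∈ F, interMatrix n p parent child α k e * u e =
      (if child k ∈ F then u (child k) else 0) -
        if parent k ∈ F then α k * u (parent k) else 0 := by
  simp only [interMatrix_apply_eq_sub α hk, sub_mul, ite_mul, one_mul, zero_mul,
    Finset.sum_sub_distrib, Finset.sum_ite_eq']

lemma interMatrix_eq_zero_of_not_interVar (α : Fin p → ℝ) (k : Fin p) {e : Fin n}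
    (he : ¬ interVar n p parent child (Sum.inl e)) : interMatrix n p parent child α k e = 0 := by
  have hparent : e ≠ parent k := fun h => he ⟨k, Or.inl h.symm⟩
  have hchild : e ≠ child k := fun h => he ⟨k, Or.inr h.symm⟩
  simp [interMatrix, hparent, hchild]

end Interdependence

section AggregatedMatrix

variable {ι : Type*} {m n p : ℕ} {src tgt : Fin n → Fin m} {parent child : Fin p → Fin n}
  {α : Fin p → ℝ}

lemma Dmat_eq_submatrix_aggregatedMatrix (r : ℕ) (T : Fin (r - p + 1) → Finset (Fin m))
    (col : Fin r → Fin n ⊕ Fin p) :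
    Dmat m n p src tgt parent child α r T col =
      (aggregatedMatrix src tgt parent child α fun h => T h.castSucc).submatrix id col := by
  ext (h | k) j <;> rcases hj : col j with e | k' <;>
    simp [Dmat, aggregatedMatrix, hj, Matrix.one_apply]

lemma aggregatedMatrix_mulVec (hst : ∀ e, src e ≠ tgt e) {x : Fin n ⊕ Fin p → ℝ}
    {b : Fin m → ℝ} {β : Fin p → ℝ}
    (hx : constraintMatrix m n p src tgt parent child α *ᵥ x = Sum.elim b β)
    (S : ι → Finset (Fin m)) :
    aggregatedMatrix src tgt parent child α S *ᵥ x = Sum.elim (fun h => ∑ i ∈ S h, b i) β := by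
  rw [constraintMatrix, Matrix.fromBlocks_mulVec, Sum.elim_eq_iff, Matrix.zero_mulVec,
    add_zero] at hx
  rw [aggregatedMatrix, Matrix.fromBlocks_mulVec, Sum.elim_eq_iff, Matrix.zero_mulVec, add_zero]
  refine ⟨funext fun h => ?_, hx.2⟩
  simp only [← hx.1, sum_incidenceMatrix_mulVec hst]
  rfl

lemma aggregatedMatrix_apply_inl_eq_zero {S : ι → Finset (Fin m)} {e : Fin n}
    (he : ¬ interVar n p parent child (Sum.inl e)) (hS : ∀ h, src e ∈ S h ↔ tgt e ∈ S h)
    (i : ι ⊕ Fin p) : aggregatedMatrix src tgt parent child α S i (Sum.inl e) = 0 := by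
  rcases i with h | k
  · exact deltaCoef_eq_zero_of_mem_iff_mem (hS h)
  · exact interMatrix_eq_zero_of_not_interVar α k he

end AggregatedMatrix

lemma src_mem_iff_tgt_mem_of_indepReach_iff {ι : Type*} {m n p : ℕ} {src tgt : Fin n → Fin m}
    {parent child : Fin p → Fin n} {B : Finset (Fin n ⊕ Fin p)} {T : ι → Finset (Fin m)}
    (hTdisj : ∀ h h', h ≠ h' → Disjoint (T h) (T h'))
    (hTcomp : ∀ i j, indepReach m n p src tgt parent child B i j ↔ ∃ h, i ∈ T h ∧ j ∈ T h)
    {e : Fin n} (heB : Sum.inl e ∈ B) (he : ¬ interVar n p parent child (Sum.inl e)) (h : ι) :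
    src e ∈ T h ↔ tgt e ∈ T h := by
  obtain ⟨h', hsrc, htgt⟩ :=
    (hTcomp _ _).mp (Relation.ReflTransGen.single ⟨e, heB, he, Or.inl ⟨rfl, rfl⟩⟩)
  rcases eq_or_ne h h' with rfl | hne
  · exact iff_of_true hsrc htgt
  · have hdisj := Finset.disjoint_right.mp (hTdisj h h' hne)
    exact iff_of_false (hdisj hsrc) (hdisj htgt)

lemma sum_interVar_add_sum_upper_eq_sum {ι M : Type*} [Fintype ι] [AddCommMonoid M] {n p : ℕ}
    {parent child : Fin p → Fin n} {B L U : Finset (Fin n ⊕ Fin p)}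
    {col : ι → Fin n ⊕ Fin p} (hcolinj : Function.Injective col)
    (hcolrange : ∀ j, j ∈ Set.range col ↔ j ∈ B ∧ interVar n p parent child j)
    (hLU : Disjoint L U) (hLUcover : L ∪ U = Bᶜ)
    (hslackL : ∀ k : Fin p, Sum.inr k ∉ B → Sum.inr k ∈ L)
    {f : Fin n ⊕ Fin p → M} (hfL : ∀ j ∈ L, f j = 0)
    (hfB : ∀ e, Sum.inl e ∈ B → ¬ interVar n p parent child (Sum.inl e) → f (Sum.inl e) = 0) :
    ∑ i, f (col i) + ∑ e with Sum.inl e ∈ U, f (Sum.inl e) = ∑ j, f j := by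
  have hnonbasic (j) : j ∈ L ∨ j ∈ U ↔ j ∉ B := by
    rw [← Finset.mem_union, hLUcover, Finset.mem_compl]
  have hslackU (k : Fin p) : Sum.inr k ∉ U := fun hk =>
    Finset.disjoint_left.mp hLU (hslackL k ((hnonbasic _).mp (Or.inr hk))) hk
  have hcolU (i) : col i ∉ U := fun hi =>
    (hnonbasic _).mp (Or.inr hi) ((hcolrange _).mp ⟨i, rfl⟩).1
  rw [← sum_eq_sum_inl_of_inr_notMem hslackU]
  refine sum_comp_add_sum_eq_sum hcolinj hcolU fun j hjcol hjU => ?_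
  by_cases hjB : j ∈ B
  · have hj : ¬ interVar n p parent child j := fun hj => hjcol ((hcolrange j).mpr ⟨hjB, hj⟩)
    rcases j with e | k
    · exact hfB e hjB hj
    · exact absurd trivial hj
  · exact hfL j (((hnonbasic j).mpr hjB).resolve_right hjU)

lemma submatrix_aggregatedMatrix_mulVec_apply {ι κ : Type*} [Fintype κ] {m n p : ℕ}
    {src tgt : Fin n → Fin m} (hst : ∀ e, src e ≠ tgt e) {parent child : Fin p → Fin n}
    {α β : Fin p → ℝ} {b : Fin m → ℝ} {u : Fin n → ℝ} {B L U : Finset (Fin n ⊕ Fin p)}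
    {S : ι → Finset (Fin m)}
    (hS : ∀ e, Sum.inl e ∈ B → ¬ interVar n p parent child (Sum.inl e) →
      ∀ h, src e ∈ S h ↔ tgt e ∈ S h)
    {col : κ → Fin n ⊕ Fin p} (hcolinj : Function.Injective col)
    (hcolrange : ∀ j, j ∈ Set.range col ↔ j ∈ B ∧ interVar n p parent child j)
    (hLU : Disjoint L U) (hLUcover : L ∪ U = Bᶜ)
    (hslackL : ∀ k : Fin p, Sum.inr k ∉ B → Sum.inr k ∈ L)
    {x : Fin n ⊕ Fin p → ℝ}
    (hx : constraintMatrix m n p src tgt parent child α *ᵥ x = Sum.elim b β)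
    (hxL : ∀ j ∈ L, x j = 0) (hxU : ∀ e, Sum.inl e ∈ U → x (Sum.inl e) = u e)
    (i : ι ⊕ Fin p) :
    ((aggregatedMatrix src tgt parent child α S).submatrix id col *ᵥ fun j => x (col j)) i =
      Sum.elim (fun h => ∑ i ∈ S h, b i) β i -
        ∑ e with Sum.inl e ∈ U,
          aggregatedMatrix src tgt parent child α S i (Sum.inl e) * u e := by
  set A := aggregatedMatrix src tgt parent child α S with hA
  have hupper : ∑ e with Sum.inl e ∈ U, A i (Sum.inl e) * u e =
      ∑ e with Sum.inl e ∈ U, A i (Sum.inl e) * x (Sum.inl e) :=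
    Finset.sum_congr rfl fun e he => by rw [hxU e (Finset.mem_filter.mp he).2]
  rw [← aggregatedMatrix_mulVec hst hx, ← hA, hupper, eq_sub_iff_add_eq]
  exact sum_interVar_add_sum_upper_eq_sum (f := fun j => A i j * x j) hcolinj hcolrange hLU
    hLUcover hslackL (fun j hj => by simp only [hxL j hj, mul_zero]) fun e heB he => by
      simp only [hA, aggregatedMatrix_apply_inl_eq_zero he (hS e heB he), zero_mul]

theorem basic_variables_solve_Dmat_system_general (m n p : ℕ) (src tgt : Fin n → Fin m)
    (hst : ∀ e, src e ≠ tgt e)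
    (parent child : Fin p → Fin n) (α : Fin p → ℝ) (hpc : ∀ k, parent k ≠ child k)
    (β : Fin p → ℝ) (b : Fin m → ℝ) (u : Fin n → ℝ)
    (B : Finset (Fin n ⊕ Fin p)) (r : ℕ) (T : Fin (r - p + 1) → Finset (Fin m))
    (hT : ∀ e, Sum.inl e ∈ B → ¬ interVar n p parent child (Sum.inl e) →
      ∀ h : Fin (r - p), src e ∈ T h.castSucc ↔ tgt e ∈ T h.castSucc)
    (col : Fin r → Fin n ⊕ Fin p)
    (hcolinj : Function.Injective col)
    (hcolrange : ∀ j : Fin n ⊕ Fin p,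
      j ∈ Set.range col ↔ j ∈ B ∧ interVar n p parent child j)
    (L U : Finset (Fin n ⊕ Fin p))
    (hLU : Disjoint L U) (hLUcover : L ∪ U = Bᶜ)
    (hslackL : ∀ k : Fin p, Sum.inr k ∉ B → Sum.inr k ∈ L)
    (xbar : Fin n ⊕ Fin p → ℝ)
    (hfeas : (constraintMatrix m n p src tgt parent child α).mulVec xbar = Sum.elim b β)
    (hxL : ∀ j ∈ L, xbar j = 0)
    (hxU : ∀ e : Fin n, Sum.inl e ∈ U → xbar (Sum.inl e) = u e) :
    (Dmat m n p src tgt parent child α r T col).mulVec (fun j => xbar (col j)) =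
      Sum.elim
        (fun h : Fin (r - p) =>
          (∑ i ∈ T h.castSucc, b i)
          + (∑ e ∈ Finset.univ.filter (fun e : Fin n =>
              Sum.inl e ∈ U ∧ src e ∉ T h.castSucc ∧ tgt e ∈ T h.castSucc), u e)
          - ∑ e ∈ Finset.univ.filter (fun e : Fin n =>
              Sum.inl e ∈ U ∧ src e ∈ T h.castSucc ∧ tgt e ∉ T h.castSucc), u e)
        (fun k : Fin p =>
          β k + (if Sum.inl (parent k) ∈ U then α k * u (parent k) else 0)
            - (if Sum.inl (child k) ∈ U then u (child k) else 0)) := by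
  rw [Dmat_eq_submatrix_aggregatedMatrix]
  ext (h | k) <;> rw [submatrix_aggregatedMatrix_mulVec_apply hst hT hcolinj hcolrange hLU hLUcover
    hslackL hfeas hxL hxU]
  · simp only [aggregatedMatrix, Matrix.fromBlocks_apply₁₁, Matrix.of_apply, sum_deltaCoef_mul,
      Finset.filter_filter, Sum.elim_inl]
    ring
  · simp only [aggregatedMatrix, Matrix.fromBlocks_apply₂₁, sum_interMatrix_mul α (hpc k),
      Finset.mem_filter, Finset.mem_univ, true_and, Sum.elim_inr]
    ring

/-- For a basic solution `x̄` associated with a basis `(B, L, U)`, the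
subvector `x̃` of interdependent basic variables satisfies `D x̃ = b̃`, where `b̃` collects
the net requirements of the trees `T_1, …, T_{r−p}` and of the `p` interdependencies. -/
theorem basic_variables_solve_Dmat_system (m n p : ℕ) (src tgt : Fin n → Fin m) (hst : ∀ e, src e ≠ tgt e)
    (parent child : Fin p → Fin n) (α : Fin p → ℝ)
    (hpc : ∀ k k' : Fin p, parent k ≠ child k')
    (hpinj : Function.Injective parent) (hcinj : Function.Injective child)
    (β : Fin p → ℝ) (b : Fin m → ℝ) (u : Fin n → ℝ)
    (B : Finset (Fin n ⊕ Fin p)) (hBcard : B.card = m + p - 1)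
    (hBind : LinearIndependent ℝ (fun j : B =>
      (constraintMatrix m n p src tgt parent child α)ᵀ j.1))
    (r : ℕ) (hpr : p ≤ r)
    (T : Fin (r - p + 1) → Finset (Fin m))
    (hTdisj : ∀ h h' : Fin (r - p + 1), h ≠ h' → Disjoint (T h) (T h'))
    (hTne : ∀ h, (T h).Nonempty)
    (hforest : NoIndepCycle m n p src tgt parent child B)
    (hTcomp : ∀ i j : Fin m,
      indepReach m n p src tgt parent child B i j ↔ ∃ h, i ∈ T h ∧ j ∈ T h)
    (col : Fin r → Fin n ⊕ Fin p)
    (hcolinj : Function.Injective col)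
    (hcolrange : ∀ j : Fin n ⊕ Fin p,
      j ∈ Set.range col ↔ j ∈ B ∧ interVar n p parent child j)
    (L U : Finset (Fin n ⊕ Fin p))
    (hLU : Disjoint L U) (hLUcover : L ∪ U = Bᶜ)
    (hslackL : ∀ k : Fin p, Sum.inr k ∉ B → Sum.inr k ∈ L)
    (xbar : Fin n ⊕ Fin p → ℝ)
    (hfeas : (constraintMatrix m n p src tgt parent child α).mulVec xbar = Sum.elim b β)
    (hxL : ∀ j ∈ L, xbar j = 0)
    (hxU : ∀ e : Fin n, Sum.inl e ∈ U → xbar (Sum.inl e) = u e) :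
    (Dmat m n p src tgt parent child α r T col).mulVec (fun j => xbar (col j)) =
      Sum.elim
        (fun h : Fin (r - p) =>
          (∑ i ∈ T h.castSucc, b i)
          + (∑ e ∈ Finset.univ.filter (fun e : Fin n =>
              Sum.inl e ∈ U ∧ src e ∉ T h.castSucc ∧ tgt e ∈ T h.castSucc), u e)
          - ∑ e ∈ Finset.univ.filter (fun e : Fin n =>
              Sum.inl e ∈ U ∧ src e ∈ T h.castSucc ∧ tgt e ∉ T h.castSucc), u e)
        (fun k : Fin p =>
          β k + (if Sum.inl (parent k) ∈ U then α k * u (parent k) else 0)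
            - (if Sum.inl (child k) ∈ U then u (child k) else 0)) :=
  basic_variables_solve_Dmat_system_general m n p src tgt hst parent child α (fun k => hpc k k) β b
    u B r T (fun _ heB he _ => src_mem_iff_tgt_mem_of_indepReach_iff hTdisj hTcomp heB he _)
    col hcolinj hcolrange L U hLU hLUcover hslackL xbar hfeas hxL hxU
end
end

section
/- Let B be a set of m + p − 1 column indices of A containing exactly r interdependent variables whose independent arcs form a spanning forest of G with components T_1, …, T_{r−p+1}, and let D be the associated r×r matrix. Let D̂ be the submatrix of D obtained by deleting, for every interdependence t whose slack variable is contained in B, both the column of that slack variable and the row of interdependence t (with a 0×0 matrix regarded as nonsingular). Then the columns of A indexed by B are linearly independent (i.e., have rank m + p − 1) if and only if D̂ is nonsingular. -/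
open Matrix

noncomputable section

/-! Contract each tree of the forest to a point (add up its node rows) and delete the rows of the
basic slacks. This linear map kills the slack columns and the forest arcs of `B` and turns the
remaining columns into those of `D̂`. On the span of the columns of `A` its kernel is spanned by
the killed columns: a node vector whose sum over every tree vanishes is a combination of forest
arcs, and the tree left out of `D` costs nothing because the entries of every incidence column add
up to `0`. Since there are exactly `m - (r - p + 1)` forest arcs, the same description of the
kernel and rank–nullity make them independent, and independence of all columns reduces to
independence of the columns of `D̂`. -/

section UnionComp

variable {K M M' ι : Type*} [Ring K] [AddCommGroup M] [AddCommGroup M'] [Module K M]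
  [Module K M'] (f : M →ₗ[K] M') {v : ι → M} {s t : Set ι}

theorem linearIndepOn_union_of_comp (hs : LinearIndepOn K v s) (hfs : ∀ i ∈ s, f (v i) = 0)
    (ht : LinearIndepOn K (f ∘ v) t) :
    LinearIndepOn K v (s ∪ t) := by
  have hker : Submodule.span K (v '' s) ≤ LinearMap.ker f :=
    Submodule.span_le.2 (Set.image_subset_iff.2 hfs)
  have hdisj : Disjoint (Submodule.span K (v '' t)) (LinearMap.ker f) := by
    simpa only [Set.image_eq_range] using Submodule.range_ker_disjoint ht
  exact hs.union (ht.of_comp f) (hdisj.symm.mono_left hker)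

theorem linearIndepOn_union_iff_comp (hst : Disjoint s t) (hs : LinearIndepOn K v s)
    (hfs : ∀ i ∈ s, f (v i) = 0)
    (hker : Submodule.span K (v '' t) ⊓ LinearMap.ker f ≤ Submodule.span K (v '' s)) :
    LinearIndepOn K v (s ∪ t) ↔ LinearIndepOn K (f ∘ v) t := by
  refine ⟨fun h => ?_, linearIndepOn_union_of_comp f hs hfs⟩
  nontriviality K
  obtain ⟨-, ht, hspan⟩ := (linearIndepOn_union_iff hst).1 h
  refine ht.map ?_
  rw [← Set.image_eq_range, Submodule.disjoint_def]
  exact fun x hx hfx => Submodule.disjoint_def.1 hspan x (hker ⟨hx, hfx⟩) hx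

end UnionComp

theorem sum_linearMap_funOnFinite {K X Y : Type*} [Semiring K] [Fintype X] [Fintype Y]
    (f : X → Y) (b : X → K) : ∑ y, FunOnFinite.linearMap K K f b y = ∑ x, b x := by
  classical
  simp only [FunOnFinite.linearMap_apply_apply]
  exact Finset.sum_fiberwise _ f b

theorem linearMap_funOnFinite_eq_zero_of_sum_eq_zero {K X ι : Type*} [Semiring K] [Fintype X]
    [Finite ι] {f : X → Option ι} {b : X → K} (hsum : ∑ x, b x = 0)
    (hsome : ∀ i, FunOnFinite.linearMap K K f b (some i) = 0) :
    FunOnFinite.linearMap K K f b = 0 := by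
  have := Fintype.ofFinite ι
  have htotal := (sum_linearMap_funOnFinite f b).trans hsum
  simp only [Fintype.sum_option, hsome, Finset.sum_const_zero, add_zero] at htotal
  exact funext fun c => c.casesOn htotal hsome

section Arcs

variable (K : Type*) {V C E : Type*} [DecidableEq V]

/-- The signed incidence vector of the arc `e` of the directed multigraph given by `src` and
`tgt`; it vanishes when `e` is a loop. -/
def arcVec [Ring K] (src tgt : E → V) (e : E) : V → K :=
  Pi.single (src e) 1 - Pi.single (tgt e) 1

theorem sum_arcVec [Ring K] [Fintype V] (src tgt : E → V) (e : E) :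
    ∑ i, arcVec K src tgt e i = 0 := by
  simp [arcVec]

theorem linearMap_arcVec [Ring K] [Finite V] [Finite C] [DecidableEq C] (src tgt : E → V)
    (π : V → C) (e : E) :
    FunOnFinite.linearMap K K π (arcVec K src tgt e) = arcVec K (π ∘ src) (π ∘ tgt) e := by
  simp only [arcVec, map_sub, FunOnFinite.linearMap_piSingle, Function.comp_apply]

/-- Reachability along the arcs of `F`, traversed in either direction. -/
def ArcReachable (src tgt : E → V) (F : Set E) : V → V → Prop :=
  Relation.ReflTransGen fun a b => ∃ e ∈ F, (src e = a ∧ tgt e = b) ∨ (src e = b ∧ tgt e = a)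

variable {src tgt : E → V} {F : Set E} {π : V → C}

theorem single_sub_single_mem_span_arcVec [Ring K] {a b : V} (h : ArcReachable src tgt F a b) :
    Pi.single a 1 - Pi.single b 1 ∈ Submodule.span K (arcVec K src tgt '' F) := by
  induction h with
  | refl => rw [sub_self]; exact Submodule.zero_mem _
  | tail _ hstep ih =>
    obtain ⟨e, he, hends⟩ := hstep
    have harc := Submodule.subset_span (R := K) (Set.mem_image_of_mem (arcVec K src tgt) he)
    rcases hends with ⟨rfl, rfl⟩ | ⟨rfl, rfl⟩
    · simpa only [arcVec, sub_add_sub_cancel] using Submodule.add_mem _ ih harc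
    · simpa only [arcVec, sub_sub_sub_cancel_right] using Submodule.sub_mem _ ih harc

/-- The arcs of `F` have the fibres of `π` as their connected components. -/
structure HasComponents (src tgt : E → V) (F : Set E) (π : V → C) : Prop where
  surjective : Function.Surjective π
  reachable_iff : ∀ a b, ArcReachable src tgt F a b ↔ π a = π b

variable [Finite V] [Finite C]

theorem HasComponents.linearMap_arcVec_eq_zero [Ring K] (hπ : HasComponents src tgt F π)
    {e : E} (he : e ∈ F) : FunOnFinite.linearMap K K π (arcVec K src tgt e) = 0 := by
  classical
  have hends : π (src e) = π (tgt e) :=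
    (hπ.reachable_iff _ _).1 (.single ⟨e, he, Or.inl ⟨rfl, rfl⟩⟩)
  rw [linearMap_arcVec, arcVec, Function.comp_apply, Function.comp_apply, hends, sub_self]

theorem HasComponents.ker_linearMap_le [Ring K] (hπ : HasComponents src tgt F π) :
    LinearMap.ker (FunOnFinite.linearMap K K π) ≤ Submodule.span K (arcVec K src tgt '' F) := by
  have := Fintype.ofFinite V
  intro b hb
  obtain ⟨root, hroot⟩ := hπ.surjective.hasRightInverse
  have hcollapse : FunOnFinite.linearMap K K (root ∘ π) b = 0 := by
    rw [FunOnFinite.linearMap_comp, LinearMap.comp_apply, LinearMap.mem_ker.1 hb, map_zero]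
  have hb_eq : b = ∑ i, b i • (Pi.single i 1 - Pi.single (root (π i)) 1 : V → K) :=
    calc b = b - FunOnFinite.linearMap K K (root ∘ π) b := by rw [hcollapse, sub_zero]
      _ = _ := by
        conv_lhs => rw [pi_eq_sum_univ' b]
        simp [map_sum, ← Finset.sum_sub_distrib, smul_sub]
  rw [hb_eq]
  refine Submodule.sum_mem _ fun i _ => Submodule.smul_mem _ _ ?_
  exact single_sub_single_mem_span_arcVec K ((hπ.reachable_iff _ _).2 (hroot (π i)).symm)

theorem HasComponents.linearIndepOn_arcVec [DivisionRing K] [Finite F]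
    (hπ : HasComponents src tgt F π) (hcard : Nat.card F + Nat.card C ≤ Nat.card V) :
    LinearIndepOn K (arcVec K src tgt) F := by
  have := Fintype.ofFinite V
  have := Fintype.ofFinite C
  have := Fintype.ofFinite F
  have hle := Submodule.finrank_mono (hπ.ker_linearMap_le K)
  have hrank := (FunOnFinite.linearMap K K π).finrank_range_add_finrank_ker
  have hrange := (LinearMap.range (FunOnFinite.linearMap K K π)).finrank_le
  rw [Module.finrank_fintype_fun_eq_card] at hrank hrange
  rw [LinearIndepOn, linearIndependent_iff_card_le_finrank_span, Set.finrank,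
    ← Set.image_eq_range]
  simp only [Nat.card_eq_fintype_card] at hcard
  omega

end Arcs

section Network

variable {K V E P ι : Type*}

/-- Replaces the node rows by their sums over the components `π ⁻¹' {some h}`, and deletes the rows
of the side constraints in `S`. The component `π ⁻¹' {none}` gets no row: its sum is minus the sum
of the others on every vector of `networkCol`. -/
def contractRows (K : Type*) [Ring K] [Finite V] [Finite ι] (π : V → Option ι) (S : Set P) :
    (V ⊕ P → K) →ₗ[K] {i : ι ⊕ P // ∀ k, i = Sum.inr k → k ∉ S} → K :=
  LinearMap.pi fun i => i.1.elim
    (fun h => LinearMap.proj (some h) ∘ₗ FunOnFinite.linearMap K K π ∘ₗ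
      LinearMap.funLeft K K Sum.inl)
    (fun k => LinearMap.proj (Sum.inr k))

theorem contractRows_eq_zero_iff [Ring K] [Finite V] [Finite ι] {π : V → Option ι} {S : Set P}
    {x : V ⊕ P → K} :
    contractRows K π S x = 0 ↔
      (∀ h, FunOnFinite.linearMap K K π (x ∘ Sum.inl) (some h) = 0) ∧
        ∀ k ∉ S, x (Sum.inr k) = 0 := by
  rw [funext_iff, Subtype.forall, Sum.forall]
  simp [contractRows, LinearMap.funLeft]

variable [DecidableEq V] [DecidableEq P]

/-- The columns of the block matrix `[[N, 0], [Q, 1]]`, where `N` is the node–arc incidence matrix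
and `Q` an arbitrary matrix of side constraints. -/
def networkCol [Ring K] (src tgt : E → V) (Q : Matrix P E K) : E ⊕ P → V ⊕ P → K :=
  Sum.elim (fun e => Sum.elim (arcVec K src tgt e) (Q.col e)) (fun k => Pi.single (Sum.inr k) 1)

variable [Ring K] {src tgt : E → V} {Q : Matrix P E K} {F J : Set E} {S : Set P}

theorem linearIndepOn_networkCol_slack_union_forest (Q : Matrix P E K) (S : Set P)
    (hF : LinearIndepOn K (arcVec K src tgt) F) :
    LinearIndepOn K (networkCol src tgt Q) (Sum.inr '' S ∪ Sum.inl '' F) := by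
  refine linearIndepOn_union_of_comp (LinearMap.funLeft K K Sum.inl) ?_ ?_ ?_
  · refine LinearIndepOn.image_of_comp _ _ (LinearIndependent.linearIndepOn ?_ S)
    exact (Pi.linearIndependent_single_one (V ⊕ P) K).comp Sum.inr Sum.inr_injective
  · rintro _ ⟨k, -, rfl⟩
    ext i
    simp [networkCol, LinearMap.funLeft_apply]
  · exact LinearIndepOn.image_of_comp _ _ hF

theorem mem_span_networkCol_slack_union_forest [Finite P] (hQ : ∀ e ∈ F, Q.col e = 0)
    {x : V ⊕ P → K} (hnode : x ∘ Sum.inl ∈ Submodule.span K (arcVec K src tgt '' F))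
    (hside : ∀ k ∉ S, x (Sum.inr k) = 0) :
    x ∈ Submodule.span K (networkCol src tgt Q '' (Sum.inr '' S ∪ Sum.inl '' F)) := by
  classical
  have := Fintype.ofFinite P
  set W := Submodule.span K (networkCol src tgt Q '' (Sum.inr '' S ∪ Sum.inl '' F))
  let extendNode : (V → K) →ₗ[K] (V ⊕ P → K) :=
    (LinearEquiv.sumArrowLequivProdArrow V P K K).symm.toLinearMap ∘ₗ LinearMap.inl K _ _
  have hforest : Submodule.span K (arcVec K src tgt '' F) ≤ W.comap extendNode := by
    rw [Submodule.span_le]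
    rintro _ ⟨e, he, rfl⟩
    refine Submodule.subset_span ⟨Sum.inl e, Or.inr ⟨e, he, rfl⟩, ?_⟩
    rw [networkCol, Sum.elim_inl, hQ e he]
    rfl
  have hslack : ∀ k, x (Sum.inr k) • networkCol src tgt Q (Sum.inr k) ∈ W := by
    intro k
    by_cases hk : k ∈ S
    · exact W.smul_mem _ (Submodule.subset_span ⟨Sum.inr k, Or.inl ⟨k, hk, rfl⟩, rfl⟩)
    · rw [hside k hk, zero_smul]
      exact W.zero_mem
  have hx : x = extendNode (x ∘ Sum.inl) +
      ∑ k, x (Sum.inr k) • networkCol src tgt Q (Sum.inr k) := by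
    ext (i | k) <;>
      simp [extendNode, networkCol, Pi.single_apply]
  rw [hx]
  exact W.add_mem (hforest hnode) (W.sum_mem fun k _ => hslack k)

theorem sum_eq_zero_of_mem_span_networkCol [Fintype V] {X : Set (E ⊕ P)} {x : V ⊕ P → K}
    (hx : x ∈ Submodule.span K (networkCol src tgt Q '' X)) : ∑ i, x (Sum.inl i) = 0 := by
  let total : (V ⊕ P → K) →ₗ[K] K := ∑ i, LinearMap.proj (Sum.inl i)
  have hle : Submodule.span K (networkCol src tgt Q '' X) ≤ LinearMap.ker total := by
    rw [Submodule.span_le]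
    rintro _ ⟨e | k, -, rfl⟩
    · simpa [total, networkCol] using sum_arcVec K src tgt e
    · simp [total, networkCol]
  simpa [total] using hle hx

variable [Finite V] [Finite ι] {π : V → Option ι}

theorem contractRows_networkCol_eq_zero (hπ : HasComponents src tgt F π)
    (hQ : ∀ e ∈ F, Q.col e = 0) {j : E ⊕ P} (hj : j ∈ Sum.inr '' S ∪ Sum.inl '' F) :
    contractRows K π S (networkCol src tgt Q j) = 0 := by
  rw [contractRows_eq_zero_iff]
  rcases hj with ⟨k, hk, rfl⟩ | ⟨e, he, rfl⟩
  · have hnode : networkCol src tgt Q (Sum.inr k) ∘ Sum.inl = 0 := by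
      ext i
      simp [networkCol]
    refine ⟨fun h => by rw [hnode, map_zero, Pi.zero_apply], fun l hl => ?_⟩
    exact Pi.single_eq_of_ne (fun heq => hl (by rwa [Sum.inr_injective heq])) 1
  · refine ⟨fun h => ?_, fun k _ => congrFun (hQ e he) k⟩
    exact congrFun (hπ.linearMap_arcVec_eq_zero K he) (some h)

end Network

theorem linearIndepOn_networkCol_iff {K V E P ι : Type*} [DivisionRing K] [Finite V] [Finite P]
    [Finite ι] [DecidableEq V] [DecidableEq P] {src tgt : E → V} {Q : Matrix P E K}
    {F J : Set E} [Finite F] (S : Set P) {π : V → Option ι} (hFJ : Disjoint F J)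
    (hQ : ∀ e ∈ F, Q.col e = 0)
    (hπ : HasComponents src tgt F π)
    (hcard : Nat.card F + Nat.card (Option ι) ≤ Nat.card V) :
    LinearIndepOn K (networkCol src tgt Q) (Sum.inr '' S ∪ Sum.inl '' F ∪ Sum.inl '' J) ↔
      LinearIndepOn K (contractRows K π S ∘ networkCol src tgt Q) (Sum.inl '' J) := by
  have := Fintype.ofFinite V
  refine linearIndepOn_union_iff_comp _ ?_ ?_ ?_ ?_
  · rw [Set.disjoint_union_left, Set.disjoint_image_iff Sum.inl_injective]
    exact ⟨Set.disjoint_image_inl_image_inr.symm, hFJ⟩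
  · exact linearIndepOn_networkCol_slack_union_forest Q S (hπ.linearIndepOn_arcVec K hcard)
  · exact fun j hj => contractRows_networkCol_eq_zero hπ hQ hj
  · rintro x ⟨hx, hzero⟩
    obtain ⟨htree, hside⟩ := contractRows_eq_zero_iff.1 (LinearMap.mem_ker.1 hzero)
    have hnode : FunOnFinite.linearMap K K π (x ∘ Sum.inl) = 0 :=
      linearMap_funOnFinite_eq_zero_of_sum_eq_zero (sum_eq_zero_of_mem_span_networkCol hx) htree
    exact mem_span_networkCol_slack_union_forest hQ (hπ.ker_linearMap_le K hnode) hside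

section Interdependence

variable {m n p r c : ℕ} {src tgt : Fin n → Fin m} {parent child : Fin p → Fin n} {α : Fin p → ℝ}
  {B : Finset (Fin n ⊕ Fin p)} {col : Fin r → Fin n ⊕ Fin p}

/-- The independent arcs contained in `B`. -/
def indepArcs (parent child : Fin p → Fin n) (B : Finset (Fin n ⊕ Fin p)) : Set (Fin n) :=
  {e | Sum.inl e ∈ B ∧ ¬ interVar n p parent child (Sum.inl e)}

/-- The interdependent arcs contained in `B`. -/
def interArcs (parent child : Fin p → Fin n) (B : Finset (Fin n ⊕ Fin p)) : Set (Fin n) :=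
  {e | Sum.inl e ∈ B ∧ interVar n p parent child (Sum.inl e)}

theorem disjoint_indepArcs_interArcs :
    Disjoint (indepArcs parent child B) (interArcs parent child B) :=
  Set.disjoint_left.2 fun _ hF hJ => hF.2 hJ.2

theorem coe_eq_slack_union_indepArcs_union_interArcs :
    (B : Set (Fin n ⊕ Fin p)) = Sum.inr '' {k | Sum.inr k ∈ B} ∪
      Sum.inl '' indepArcs parent child B ∪ Sum.inl '' interArcs parent child B := by
  ext (e | k)
  · by_cases he : interVar n p parent child (Sum.inl e) <;> simp [indepArcs, interArcs, he]
  · simp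

theorem range_col_eq_interArcs
    (hcol : ∀ j, j ∈ Set.range col ↔ j ∈ B ∧ interVar n p parent child j) :
    Set.range (col ∘ Subtype.val : {j : Fin r // ∀ k : Fin p, col j ≠ Sum.inr k} → _) =
      Sum.inl '' interArcs parent child B := by
  ext (e | k)
  · have hmem : (Sum.inl e : Fin n ⊕ Fin p) ∈ Sum.inl '' interArcs parent child B ↔
        Sum.inl e ∈ Set.range col := by
      rw [Sum.inl_injective.mem_set_image, hcol, interArcs, Set.mem_ofPred_eq]
    rw [hmem]
    constructor
    · rintro ⟨j, hj⟩
      exact ⟨j.1, hj⟩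
    · rintro ⟨j, hj⟩
      exact ⟨⟨j, fun k hk => Sum.inl_ne_inr (hj.symm.trans hk)⟩, hj⟩
  · refine iff_of_false ?_ (by simp)
    rintro ⟨j, hj⟩
    exact j.2 k hj

theorem card_indepArcs_add (hinj : Function.Injective col)
    (hcol : ∀ j, j ∈ Set.range col ↔ j ∈ B ∧ interVar n p parent child j) :
    Nat.card (indepArcs parent child B) + r = B.card := by
  classical
  have hinter : {j ∈ B | interVar n p parent child j} = Finset.univ.image col := by
    ext j
    simpa using (hcol j).symm
  have hindep : {j ∈ B | ¬ interVar n p parent child j} =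
      (Finset.univ.filter (· ∈ indepArcs parent child B)).map .inl := by
    ext (e | k)
    · simp only [Finset.mem_filter, Finset.mem_map, Finset.mem_univ, true_and,
        Function.Embedding.inl_apply, Sum.inl.injEq, exists_eq_right]
      rfl
    · exact iff_of_false (fun h => (Finset.mem_filter.1 h).2 trivial) (by simp)
  rw [← Finset.card_filter_add_card_filter_not (interVar n p parent child), hinter, hindep,
    Finset.card_image_of_injective _ hinj, Finset.card_map, Finset.card_fin, add_comm]
  simp [Nat.card_eq_fintype_card, Fintype.card_subtype]

theorem constraintMatrix_transpose (hst : ∀ e, src e ≠ tgt e) :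
    (constraintMatrix m n p src tgt parent child α)ᵀ =
      networkCol src tgt (interMatrix n p parent child α) := by
  ext (e | k) (i | l)
  · have := hst e
    by_cases hs : src e = i <;> by_cases ht : tgt e = i <;>
      simp_all [constraintMatrix, networkCol, incidenceMatrix, arcVec, eq_comm]
  · rfl
  · simp [constraintMatrix, networkCol]
  · simp [constraintMatrix, networkCol, Matrix.one_apply, Pi.single_apply]

theorem interMatrix_col_eq_zero {e : Fin n} (he : ¬ interVar n p parent child (Sum.inl e)) :
    (interMatrix n p parent child α).col e = 0 := by
  simp only [interVar, not_exists, not_or] at he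
  ext k
  simp [interMatrix, Ne.symm (he k).1, Ne.symm (he k).2]

theorem deltaCoef_eq_arcVec {C : Type*} [DecidableEq C] {π : Fin m → C} {T : Finset (Fin m)}
    {h : C} (hT : ∀ i, i ∈ T ↔ π i = h) (e : Fin n) :
    deltaCoef m n src tgt e T = arcVec ℝ (π ∘ src) (π ∘ tgt) e h := by
  by_cases hs : π (src e) = h <;> by_cases ht : π (tgt e) = h <;>
    simp [deltaCoef, arcVec, hT, hs, ht, Ne.symm]

theorem contractRows_networkCol_eq_Dmat {T : Fin (r - p + 1) → Finset (Fin m)}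
    {π : Fin m → Option (Fin (r - p))} (hT : ∀ i h, i ∈ T h.castSucc ↔ π i = some h)
    (S : Set (Fin p)) (j : Fin r) :
    contractRows ℝ π S (networkCol src tgt (interMatrix n p parent child α) (col j)) =
      fun i => Dmat m n p src tgt parent child α r T col i.1 j := by
  ext ⟨h | k, hi⟩ <;> rcases hj : col j with e | l
  · have hdelta := deltaCoef_eq_arcVec (src := src) (tgt := tgt) (fun i => hT i h) e
    rw [← linearMap_arcVec] at hdelta
    rw [Dmat, Matrix.of_apply, hj]
    exact hdelta.symm
  · have hnode : networkCol src tgt (interMatrix n p parent child α) (Sum.inr l) ∘ Sum.inl = 0 := by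
      ext i
      simp [networkCol]
    simp [Dmat, hj, contractRows, LinearMap.funLeft, hnode]
  · simp [Dmat, hj, contractRows, networkCol]
  · simp [Dmat, hj, contractRows, networkCol, Pi.single_apply]

theorem exists_hasComponents {T : Fin (c + 1) → Finset (Fin m)}
    (hdisj : ∀ h h', h ≠ h' → Disjoint (T h) (T h')) (hne : ∀ h, (T h).Nonempty)
    (hcomp : ∀ i j, indepReach m n p src tgt parent child B i j ↔ ∃ h, i ∈ T h ∧ j ∈ T h) :
    ∃ π : Fin m → Option (Fin c), HasComponents src tgt (indepArcs parent child B) π ∧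
      ∀ i h, i ∈ T h.castSucc ↔ π i = some h := by
  have hcover : ∀ i, ∃ h, i ∈ T h := fun i => by
    obtain ⟨h, hi, -⟩ := (hcomp i i).1 .refl
    exact ⟨h, hi⟩
  let parts : IndexedPartition fun h => (T h : Set (Fin m)) :=
    .mk' _ (fun h h' hh => Finset.disjoint_coe.2 (hdisj h h' hh)) hne hcover
  have hmem : ∀ i h, i ∈ T h ↔ parts.index i = h := fun i h => parts.mem_iff_index_eq
  refine ⟨finSuccEquivLast ∘ parts.index, ⟨?_, fun a b => ?_⟩, fun i h => ?_⟩
  · exact finSuccEquivLast.surjective.comp fun h => ⟨_, parts.index_some h⟩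
  · have : ArcReachable src tgt (indepArcs parent child B) a b ↔
        indepReach m n p src tgt parent child B a b := by
      simp only [ArcReachable, indepReach, indepArcs, Set.mem_ofPred_eq, and_assoc]
    simp [this, hcomp, hmem, eq_comm]
  · rw [hmem, ← finSuccEquivLast_castSucc, Function.comp_apply, EmbeddingLike.apply_eq_iff_eq]

theorem basis_iff_Dhat_nonsingular_general (m n p : ℕ) (src tgt : Fin n → Fin m)
    (hst : ∀ e, src e ≠ tgt e) (parent child : Fin p → Fin n) (α : Fin p → ℝ)
    (B : Finset (Fin n ⊕ Fin p)) (hBcard : B.card = m + p - 1)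
    (r : ℕ) (hpr : p ≤ r)
    (T : Fin (r - p + 1) → Finset (Fin m))
    (hTdisj : ∀ h h' : Fin (r - p + 1), h ≠ h' → Disjoint (T h) (T h'))
    (hTne : ∀ h, (T h).Nonempty)
    (hTcomp : ∀ i j : Fin m,
      indepReach m n p src tgt parent child B i j ↔ ∃ h, i ∈ T h ∧ j ∈ T h)
    (col : Fin r → Fin n ⊕ Fin p)
    (hcolinj : Function.Injective col)
    (hcolrange : ∀ j : Fin n ⊕ Fin p,
      j ∈ Set.range col ↔ j ∈ B ∧ interVar n p parent child j) :
    LinearIndependent ℝ (fun j : B =>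
        (constraintMatrix m n p src tgt parent child α)ᵀ j.1) ↔
      LinearIndependent ℝ
        (fun j : {j : Fin r // ∀ k : Fin p, col j ≠ Sum.inr k} =>
          fun i : {i : Fin (r - p) ⊕ Fin p //
              ∀ k : Fin p, i = Sum.inr k → (Sum.inr k : Fin n ⊕ Fin p) ∉ B} =>
            Dmat m n p src tgt parent child α r T col i.1 j.1) := by
  obtain ⟨π, hπ, hTπ⟩ := exists_hasComponents hTdisj hTne hTcomp
  have hcard : Nat.card (indepArcs parent child B) + Nat.card (Option (Fin (r - p))) ≤
      Nat.card (Fin m) := by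
    have hsum := card_indepArcs_add hcolinj hcolrange
    have hm : 0 < m := (hTne 0).choose.pos
    rw [Finite.card_option, Nat.card_fin, Nat.card_fin]
    omega
  calc
    _ ↔ LinearIndepOn ℝ (networkCol src tgt (interMatrix n p parent child α)) (B : Set _) := by
      rw [constraintMatrix_transpose hst]
      rfl
    _ ↔ LinearIndepOn ℝ (contractRows ℝ π {k | Sum.inr k ∈ B} ∘
          networkCol src tgt (interMatrix n p parent child α))
          (Sum.inl '' interArcs parent child B) := by
      rw [coe_eq_slack_union_indepArcs_union_interArcs (parent := parent) (child := child)]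
      exact linearIndepOn_networkCol_iff _ disjoint_indepArcs_interArcs
        (fun e he => interMatrix_col_eq_zero he.2) hπ hcard
    _ ↔ _ := by
      rw [← range_col_eq_interArcs hcolrange,
        linearIndepOn_range_iff (hcolinj.comp Subtype.val_injective)]
      simp only [Function.comp_def, contractRows_networkCol_eq_Dmat hTπ]
      rfl

end Interdependence

/-- The columns of `A` indexed by `B` are linearly independent iff the
reduced matrix `D̂`, obtained from `D` by deleting the column of every basic slack
variable and the row of the corresponding interdependence, is nonsingular. -/
theorem basis_iff_Dhat_nonsingular (m n p : ℕ) (src tgt : Fin n → Fin m) (hst : ∀ e, src e ≠ tgt e)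
    (parent child : Fin p → Fin n) (α : Fin p → ℝ)
    (hpc : ∀ k k' : Fin p, parent k ≠ child k')
    (hpinj : Function.Injective parent) (hcinj : Function.Injective child)
    (B : Finset (Fin n ⊕ Fin p)) (hBcard : B.card = m + p - 1)
    (r : ℕ) (hpr : p ≤ r)
    (T : Fin (r - p + 1) → Finset (Fin m))
    (hTdisj : ∀ h h' : Fin (r - p + 1), h ≠ h' → Disjoint (T h) (T h'))
    (hTne : ∀ h, (T h).Nonempty)
    (hforest : NoIndepCycle m n p src tgt parent child B)
    (hTcomp : ∀ i j : Fin m,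
      indepReach m n p src tgt parent child B i j ↔ ∃ h, i ∈ T h ∧ j ∈ T h)
    (col : Fin r → Fin n ⊕ Fin p)
    (hcolinj : Function.Injective col)
    (hcolrange : ∀ j : Fin n ⊕ Fin p,
      j ∈ Set.range col ↔ j ∈ B ∧ interVar n p parent child j) :
    LinearIndependent ℝ (fun j : B =>
        (constraintMatrix m n p src tgt parent child α)ᵀ j.1) ↔
      LinearIndependent ℝ
        (fun j : {j : Fin r // ∀ k : Fin p, col j ≠ Sum.inr k} =>
          fun i : {i : Fin (r - p) ⊕ Fin p //
              ∀ k : Fin p, i = Sum.inr k → (Sum.inr k : Fin n ⊕ Fin p) ∉ B} =>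
            Dmat m n p src tgt parent child α r T col i.1 j.1) :=
  basis_iff_Dhat_nonsingular_general m n p src tgt hst parent child α B hBcard r hpr T hTdisj hTne
    hTcomp col hcolinj hcolrange
end
end

section
/- Let B be a set of m + p − 1 column indices of A containing exactly r interdependent variables whose independent arcs form a spanning forest of G with components T_1, …, T_{r−p+1}, let D be the associated r×r matrix, and let D̂ be the submatrix of D obtained by deleting, for every interdependence t whose slack variable is contained in B, both the column of that slack variable and the row of interdependence t. Assume D is nonsingular, and let w ∈ ℝ^r be a vector (indexed like the columns of D) whose component is 0 for every slack variable contained in B. Then the unique solution σ of Dᵀσ = w satisfies σ_t = 0 for every interdependence t whose slack variable is contained in B, and the restriction of σ to the remaining components (those indexed by the rows of D that survive in D̂, i.e., the trees T_1,…,T_{r−p} and the interdependencies without a basic slack) is the unique solution σ̂ of D̂ᵀσ̂ = ŵ, where ŵ is the restriction of w to the columns of D̂. -/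
open Matrix

noncomputable section

/-!
A basic slack variable has a unit vector as its column of `D`, so its equation in `Dᵀ σ = w` reads
`σ_t = w_slack = 0`. Hence `Dᵀ σ = w` splits into these vanishing conditions and the system
`D̂ᵀ σ̂ = ŵ` for the remaining coordinates; extending a solution of the latter by zero solves the
former, so uniqueness passes from `Dᵀ` to `D̂ᵀ`.
-/

section LinearSystem

variable {ι ι' κ κ' R : Type*} [Fintype ι] [Fintype ι']

theorem submatrix_mulVec_comp_of_injective [NonUnitalNonAssocSemiring R] (M : Matrix κ ι R)
    (f : κ' → κ) {g : ι' → ι} (hg : Function.Injective g) {v : ι → R}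
    (hv : ∀ i ∉ Set.range g, v i = 0) :
    M.submatrix f g *ᵥ (v ∘ g) = (M *ᵥ v) ∘ f := by
  ext j
  exact Fintype.sum_of_injective g hg _ _ (fun i hi => by rw [hv i hi, mul_zero]) fun _ => rfl

theorem mulVec_apply_of_row_eq_single [NonAssocSemiring R] [DecidableEq ι] {M : Matrix κ ι R}
    {j : κ} {i : ι} (hji : M j = Pi.single i 1) (v : ι → R) : (M *ᵥ v) j = v i := by
  rw [mulVec, hji, single_one_dotProduct]

theorem mulVec_eq_iff_submatrix_mulVec_eq [NonAssocSemiring R] [DecidableEq ι]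
    {M : Matrix κ ι R} {f : κ' → κ} {g : ι' → ι} (hg : Function.Injective g)
    (hrow : ∀ j ∉ Set.range f, ∃ i ∉ Set.range g, M j = Pi.single i 1)
    (hcol : ∀ i ∉ Set.range g, ∃ j ∉ Set.range f, M j = Pi.single i 1)
    {w : κ → R} (hw : ∀ j ∉ Set.range f, w j = 0) {v : ι → R} :
    M *ᵥ v = w ↔ (∀ i ∉ Set.range g, v i = 0) ∧ M.submatrix f g *ᵥ (v ∘ g) = w ∘ f := by
  constructor
  · rintro rfl
    have hv : ∀ i ∉ Set.range g, v i = 0 := fun i hi => by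
      obtain ⟨j, hj, hji⟩ := hcol i hi
      rw [← mulVec_apply_of_row_eq_single hji v, hw j hj]
    exact ⟨hv, submatrix_mulVec_comp_of_injective M f hg hv⟩
  · rintro ⟨hv, hsub⟩
    rw [submatrix_mulVec_comp_of_injective M f hg hv] at hsub
    ext j
    by_cases hj : j ∈ Set.range f
    · obtain ⟨j', rfl⟩ := hj
      exact congrFun hsub j'
    · obtain ⟨i, hi, hji⟩ := hrow j hj
      rw [mulVec_apply_of_row_eq_single hji, hv i hi, hw j hj]

theorem submatrix_mulVec_eq_iff_eq_comp [NonAssocSemiring R] [DecidableEq ι]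
    {M : Matrix κ ι R} {f : κ' → κ} {g : ι' → ι} (hg : Function.Injective g)
    (hrow : ∀ j ∉ Set.range f, ∃ i ∉ Set.range g, M j = Pi.single i 1)
    (hcol : ∀ i ∉ Set.range g, ∃ j ∉ Set.range f, M j = Pi.single i 1)
    (hM : Function.Injective M.mulVec) {w : κ → R} (hw : ∀ j ∉ Set.range f, w j = 0)
    {v : ι → R} (hv : M *ᵥ v = w) {x : ι' → R} :
    M.submatrix f g *ᵥ x = w ∘ f ↔ x = v ∘ g := by
  constructor
  · intro hx
    have hcomp : Function.extend g x (0 : ι → R) ∘ g = x := Function.extend_comp hg x 0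
    have hzero : ∀ i ∉ Set.range g, Function.extend g x (0 : ι → R) i = 0 :=
      fun i hi => Function.extend_apply' x (0 : ι → R) i hi
    have hsol : M *ᵥ Function.extend g x 0 = w :=
      (mulVec_eq_iff_submatrix_mulVec_eq hg hrow hcol hw).2 ⟨hzero, by rw [hcomp, hx]⟩
    rw [← hM (hsol.trans hv.symm), hcomp]
  · rintro rfl
    exact ((mulVec_eq_iff_submatrix_mulVec_eq hg hrow hcol hw).1 hv).2

theorem linearIndependent_row_iff_col_of_card_eq {K : Type*} [Field K] [Fintype κ]
    (hcard : Fintype.card κ = Fintype.card ι) (M : Matrix κ ι K) :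
    LinearIndependent K M.row ↔ LinearIndependent K M.col := by
  rw [linearIndependent_iff_card_eq_finrank_span, linearIndependent_iff_card_eq_finrank_span,
    Set.finrank, Set.finrank, ← rank_eq_finrank_span_row, ← rank_eq_finrank_span_cols, hcard]

end LinearSystem

section Dhat

variable {m n p q r : ℕ}

/-- The rows of `D` that survive in `D̂`: all trees, and the interdependencies whose slack variable
is not in `B`. -/
def keptRows (q : ℕ) (B : Finset (Fin n ⊕ Fin p)) : Set (Fin q ⊕ Fin p) :=
  {i | ∀ k : Fin p, i = Sum.inr k → Sum.inr k ∉ B}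

instance (B : Finset (Fin n ⊕ Fin p)) : DecidablePred (· ∈ keptRows q B) :=
  fun i => inferInstanceAs (Decidable (∀ k : Fin p, i = Sum.inr k → Sum.inr k ∉ B))

/-- The columns of `D` that survive in `D̂`: those enumerating an arc rather than a slack
variable. -/
def keptCols (col : Fin r → Fin n ⊕ Fin p) : Set (Fin r) :=
  {j | ∀ k : Fin p, col j ≠ Sum.inr k}

/-- The matrix `D̂`, with its rows and columns indexed by the surviving rows and columns of `D`. -/
def Dhat (src tgt : Fin n → Fin m) (parent child : Fin p → Fin n) (α : Fin p → ℝ)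
    (B : Finset (Fin n ⊕ Fin p)) (T : Fin (r - p + 1) → Finset (Fin m))
    (col : Fin r → Fin n ⊕ Fin p) : Matrix (keptRows (r - p) B) (keptCols col) ℝ :=
  (Dmat m n p src tgt parent child α r T col).submatrix Subtype.val Subtype.val

theorem notMem_keptRows {B : Finset (Fin n ⊕ Fin p)} {i : Fin q ⊕ Fin p} :
    i ∉ keptRows q B ↔ ∃ k : Fin p, i = Sum.inr k ∧ Sum.inr k ∈ B := by
  simp [keptRows]

theorem notMem_keptCols {col : Fin r → Fin n ⊕ Fin p} {j : Fin r} :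
    j ∉ keptCols col ↔ ∃ k : Fin p, col j = Sum.inr k := by
  simp [keptCols]

variable {src tgt : Fin n → Fin m} {parent child : Fin p → Fin n} {α : Fin p → ℝ}
  {T : Fin (r - p + 1) → Finset (Fin m)} {col : Fin r → Fin n ⊕ Fin p}

theorem Dmat_transpose_apply_of_slack {j : Fin r} {k : Fin p} (hj : col j = Sum.inr k) :
    (Dmat m n p src tgt parent child α r T col)ᵀ j = Pi.single (Sum.inr k) 1 := by
  ext (h | k') <;> simp [Dmat, hj, Pi.single_apply]

theorem Dmat_transpose_mulVec_injective (hpr : p ≤ r)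
    (hD : LinearIndependent ℝ (Dmat m n p src tgt parent child α r T col)ᵀ.row) :
    Function.Injective (Dmat m n p src tgt parent child α r T col)ᵀ.mulVec := by
  have hcard : Fintype.card (Fin r) = Fintype.card (Fin (r - p) ⊕ Fin p) := by
    simp [Nat.sub_add_cancel hpr]
  exact mulVec_injective_iff.2 ((linearIndependent_row_iff_col_of_card_eq hcard _).1 hD)

theorem Dhat_system_solution_general (hpr : p ≤ r) {B : Finset (Fin n ⊕ Fin p)}
    (hslack : ∀ k : Fin p, Sum.inr k ∈ Set.range col ↔ Sum.inr k ∈ B)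
    (hD : LinearIndependent ℝ (Dmat m n p src tgt parent child α r T col)ᵀ.row)
    {w : Fin r → ℝ} (hw : ∀ j, (∃ k : Fin p, col j = Sum.inr k) → w j = 0)
    {σ : Fin (r - p) ⊕ Fin p → ℝ}
    (hσ : (Dmat m n p src tgt parent child α r T col)ᵀ *ᵥ σ = w) :
    (∀ k : Fin p, Sum.inr k ∈ B → σ (Sum.inr k) = 0) ∧
      ∀ σhat : keptRows (r - p) B → ℝ,
        (Dhat src tgt parent child α B T col)ᵀ *ᵥ σhat = (fun j : keptCols col => w j) ↔
          σhat = fun i : keptRows (r - p) B => σ i := by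
  have hrow : ∀ j ∉ Set.range ((↑) : keptCols col → Fin r),
      ∃ i ∉ Set.range ((↑) : keptRows (r - p) B → Fin (r - p) ⊕ Fin p),
        (Dmat m n p src tgt parent child α r T col)ᵀ j = Pi.single i 1 := by
    simp only [Subtype.range_coe, notMem_keptCols, notMem_keptRows]
    rintro j ⟨k, hj⟩
    exact ⟨Sum.inr k, ⟨k, rfl, (hslack k).1 ⟨j, hj⟩⟩, Dmat_transpose_apply_of_slack hj⟩
  have hcol : ∀ i ∉ Set.range ((↑) : keptRows (r - p) B → Fin (r - p) ⊕ Fin p),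
      ∃ j ∉ Set.range ((↑) : keptCols col → Fin r),
        (Dmat m n p src tgt parent child α r T col)ᵀ j = Pi.single i 1 := by
    simp only [Subtype.range_coe, notMem_keptCols, notMem_keptRows]
    rintro _ ⟨k, rfl, hk⟩
    obtain ⟨j, hj⟩ := (hslack k).2 hk
    exact ⟨j, ⟨k, hj⟩, Dmat_transpose_apply_of_slack hj⟩
  have hw' : ∀ j ∉ Set.range ((↑) : keptCols col → Fin r), w j = 0 := by
    simpa only [Subtype.range_coe, notMem_keptCols] using hw
  have hvanish := ((mulVec_eq_iff_submatrix_mulVec_eq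
    Subtype.val_injective hrow hcol hw').1 hσ).1
  refine ⟨fun k hk => hvanish _ ?_, fun σhat => ?_⟩
  · simpa only [Subtype.range_coe, notMem_keptRows] using ⟨k, rfl, hk⟩
  · exact submatrix_mulVec_eq_iff_eq_comp Subtype.val_injective hrow hcol
      (Dmat_transpose_mulVec_injective hpr hD) hw' hσ

end Dhat

/-- If `D` is nonsingular and `w` vanishes on the columns of basic
slack variables, then the solution `σ` of `Dᵀ σ = w` vanishes on the rows of basic
slacks, and its restriction to the surviving rows is the unique solution of
`D̂ᵀ σ̂ = ŵ`. -/
theorem Dhat_system_solution (m n p : ℕ) (src tgt : Fin n → Fin m) (hst : ∀ e, src e ≠ tgt e)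
    (parent child : Fin p → Fin n) (α : Fin p → ℝ)
    (hpc : ∀ k k' : Fin p, parent k ≠ child k')
    (hpinj : Function.Injective parent) (hcinj : Function.Injective child)
    (B : Finset (Fin n ⊕ Fin p)) (hBcard : B.card = m + p - 1)
    (r : ℕ) (hpr : p ≤ r)
    (T : Fin (r - p + 1) → Finset (Fin m))
    (hTdisj : ∀ h h' : Fin (r - p + 1), h ≠ h' → Disjoint (T h) (T h'))
    (hTne : ∀ h, (T h).Nonempty)
    (hforest : NoIndepCycle m n p src tgt parent child B)
    (hTcomp : ∀ i j : Fin m,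
      indepReach m n p src tgt parent child B i j ↔ ∃ h, i ∈ T h ∧ j ∈ T h)
    (col : Fin r → Fin n ⊕ Fin p)
    (hcolinj : Function.Injective col)
    (hcolrange : ∀ j : Fin n ⊕ Fin p,
      j ∈ Set.range col ↔ j ∈ B ∧ interVar n p parent child j)
    (hD : LinearIndependent ℝ (fun j : Fin r =>
      (Dmat m n p src tgt parent child α r T col)ᵀ j))
    (w : Fin r → ℝ)
    (hw : ∀ j : Fin r, (∃ k : Fin p, col j = Sum.inr k) → w j = 0)
    (σ : Fin (r - p) ⊕ Fin p → ℝ)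
    (hσ : (Dmat m n p src tgt parent child α r T col)ᵀ.mulVec σ = w) :
    (∀ k : Fin p, Sum.inr k ∈ B → σ (Sum.inr k) = 0) ∧
    ∀ σhat : {i : Fin (r - p) ⊕ Fin p //
        ∀ k : Fin p, i = Sum.inr k → (Sum.inr k : Fin n ⊕ Fin p) ∉ B} → ℝ,
      ((Matrix.of fun (i : {i : Fin (r - p) ⊕ Fin p //
            ∀ k : Fin p, i = Sum.inr k → (Sum.inr k : Fin n ⊕ Fin p) ∉ B})
          (j : {j : Fin r // ∀ k : Fin p, col j ≠ Sum.inr k}) =>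
          Dmat m n p src tgt parent child α r T col i.1 j.1)ᵀ.mulVec σhat
        = fun j : {j : Fin r // ∀ k : Fin p, col j ≠ Sum.inr k} => w j.1)
      ↔ σhat = fun i => σ i.1 :=
  Dhat_system_solution_general hpr (fun k => (hcolrange _).trans (and_iff_left trivial)) hD hw hσ
end
end
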